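/- arXiv:math/0512194 — 3 statements merged into one kernel-verified Lean document; each statement's English description precedes it below -/
import Mathlib

section
/- Let t : 𝒜 ⥤ ℬ ⥤ Type be a Type-valued bifunctor, and suppose given biuniversal elements u ∈ t(A, B), u' ∈ t(A', B'), u'' ∈ t(A'', B'') for objects A, A', A'' of 𝒜 and B, B', B'' of ℬ. Say that α : A ⟶ A' corresponds to β : B' ⟶ B when t(α, B)(u) = t(A', β)(u') in t(A', B). Then: (i) this correspondence is a bijection between Hom(A, A') and Hom(B', B); (ii) when A' = A, B' = B and u' = u, the identity of A corresponds to the identity of B; (iii) if α : A ⟶ A' corresponds to β : B' ⟶ B (with respect to u, u') and α' : A' ⟶ A'' corresponds to β' : B'' ⟶ B' (with respect to u', u''), then α' ∘ α corresponds to β ∘ β' (with respect to u, u''). Hence a family of biuniversal elements induces a duality (contravariant isomorphism of categories) between the corresponding objects. -/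
/-!
A map `α : A ⟶ A'` and a map `β : B' ⟶ B` correspond when they name the same element of `t(A', B)`.
Universality of `u` for `B` identifies `Hom(A, A')` with `t(A', B)`, and universality of `u'` for
`A'` identifies `Hom(B', B)` with `t(A', B)`, so the correspondence is a bijection. Compatibility
with identities and composition follows from functoriality of `t` in each variable and the
interchange of the two actions.
-/

open CategoryTheory

universe v v' u u' w

variable {𝒜 : Type u} [Category.{v} 𝒜] {ℬ : Type u'} [Category.{v'} ℬ]

/-- `u ∈ t(A,B)` is universal for `A` if `β ↦ t(A,β)(u)` is bijective for every `B'`. -/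
def UnivForA (t : 𝒜 ⥤ ℬ ⥤ Type w) {A : 𝒜} {B : ℬ} (u : (t.obj A).obj B) : Prop :=
  ∀ B' : ℬ, Function.Bijective (fun β : B ⟶ B' => (t.obj A).map β u)

/-- `u ∈ t(A,B)` is universal for `B` if `α ↦ t(α,B)(u)` is bijective for every `A'`. -/
def UnivForB (t : 𝒜 ⥤ ℬ ⥤ Type w) {A : 𝒜} {B : ℬ} (u : (t.obj A).obj B) : Prop :=
  ∀ A' : 𝒜, Function.Bijective (fun α : A ⟶ A' => (t.map α).app B u)

/-- A biuniversal element is universal for both arguments. -/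
def Biuniv (t : 𝒜 ⥤ ℬ ⥤ Type w) {A : 𝒜} {B : ℬ} (u : (t.obj A).obj B) : Prop :=
  UnivForA t u ∧ UnivForB t u

/-- `α : A ⟶ A'` corresponds to `β : B' ⟶ B` (w.r.t. biuniversal elements `u`, `u'`)
when `t(α,B)(u) = t(A',β)(u')` in `t(A',B)`. -/
def Corr (t : 𝒜 ⥤ ℬ ⥤ Type w) {A A' : 𝒜} {B B' : ℬ}
    (u : (t.obj A).obj B) (u' : (t.obj A').obj B') (α : A ⟶ A') (β : B' ⟶ B) : Prop :=
  (t.map α).app B u = (t.obj A').map β u'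

/-- the correspondence induced by biuniversal elements is a bijection
between hom-sets, preserves identities, and is (contravariantly) functorial. -/
theorem stmt_10 (t : 𝒜 ⥤ ℬ ⥤ Type w) {A A' A'' : 𝒜} {B B' B'' : ℬ}
    (u : (t.obj A).obj B) (u' : (t.obj A').obj B') (u'' : (t.obj A'').obj B'')
    (hu : Biuniv t u) (hu' : Biuniv t u') (hu'' : Biuniv t u'') :
    (∀ α : A ⟶ A', ∃! β : B' ⟶ B, Corr t u u' α β) ∧
    (∀ β : B' ⟶ B, ∃! α : A ⟶ A', Corr t u u' α β) ∧
    Corr t u u (𝟙 A) (𝟙 B) ∧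
    (∀ (α : A ⟶ A') (α' : A' ⟶ A'') (β : B' ⟶ B) (β' : B'' ⟶ B'),
      Corr t u u' α β → Corr t u' u'' α' β' → Corr t u u'' (α ≫ α') (β' ≫ β)) := by
  refine ⟨fun α => ?_, fun β => ?_, ?_, fun α α' β β' h h' => ?_⟩
  · obtain ⟨β, hβ, huniq⟩ := (hu'.1 B).existsUnique ((t.map α).app B u)
    exact ⟨β, hβ.symm, fun γ hγ => huniq γ hγ.symm⟩
  · exact (hu.2 A').existsUnique ((t.obj A').map β u')
  · simp [Corr]
  · unfold Corr at h h' ⊢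
    -- Naturality of `t(α', -)` at `β` is what lets the two correspondences be composed.
    have nat : (t.map α').app B ((t.obj A').map β u') =
        (t.obj A'').map β ((t.map α').app B' u') :=
      NatTrans.naturality_apply (t.map α') β u'
    calc (t.map (α ≫ α')).app B u
        = (t.map α').app B ((t.map α).app B u) := by simp
      _ = (t.map α').app B ((t.obj A').map β u') := by rw [h]
      _ = (t.obj A'').map β ((t.map α').app B' u') := nat
      _ = (t.obj A'').map β ((t.obj A'').map β' u'') := by rw [h']
      _ = (t.obj A'').map (β' ≫ β) u'' := by simp
end

section
/- Let L : 𝒜 ⥤ ℬ ⥤ 𝒞 and R : ℬᵒᵖ ⥤ 𝒞 ⥤ 𝒜 be functors equipped with an adjunction with parameter. Then L is right adequate if and only if R is left adequate; that is, the functor ℬ ⥤ [𝒜, 𝒞] sending B to the partial functor L(-, B) is fully faithful if and only if the functor ℬᵒᵖ ⥤ [𝒞, 𝒜] sending B to the partial functor R(B, -) is fully faithful. -/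
/-!
For each `B`, the bijections `e` make `L(-, B)` left adjoint to `R(B, -)`. Taking conjugates
(mates) is therefore a bijection `(L(-, B') ⟶ L(-, B)) ≃ (R(B, -) ⟶ R(B', -))`, and naturality of
`e` in the parameter says exactly that the conjugate of `L(-, k)` is `R(k, -)` for `k : B' ⟶ B`.
Hence the action of `B ↦ L(-, B)` on a hom-set is bijective iff that of `B ↦ R(B, -)` is.
-/

open CategoryTheory Opposite

universe v₁ v₂ v₃ u₁ u₂ u₃

variable {𝒜 : Type u₁} [Category.{v₁} 𝒜] {ℬ : Type u₂} [Category.{v₂} ℬ]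
  {𝒞 : Type u₃} [Category.{v₃} 𝒞]

/-- for an adjunction with parameter `L(-,B) ⊣ R(B,-)`, `L` is right
adequate iff `R` is left adequate: the curried functor `B ↦ L(-,B)` (that is, `L.flip`)
is fully faithful iff the curried functor `B ↦ R(B,-)` (that is, `R` itself) is fully
faithful. -/
theorem stmt_13 (L : 𝒜 ⥤ ℬ ⥤ 𝒞) (R : ℬᵒᵖ ⥤ 𝒞 ⥤ 𝒜)
    (e : ∀ (A : 𝒜) (B : ℬ) (C : 𝒞), ((L.obj A).obj B ⟶ C) ≃ (A ⟶ (R.obj (op B)).obj C))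
    (natC : ∀ (A : 𝒜) (B : ℬ) (C C' : 𝒞) (g : C ⟶ C') (f : (L.obj A).obj B ⟶ C),
      e A B C' (f ≫ g) = e A B C f ≫ (R.obj (op B)).map g)
    (natA : ∀ (A' A : 𝒜) (B : ℬ) (C : 𝒞) (h : A' ⟶ A) (f : (L.obj A).obj B ⟶ C),
      e A' B C ((L.map h).app B ≫ f) = h ≫ e A B C f)
    (natB : ∀ (A : 𝒜) (B' B : ℬ) (C : 𝒞) (k : B' ⟶ B) (f : (L.obj A).obj B ⟶ C),
      e A B' C ((L.obj A).map k ≫ f) = e A B C f ≫ (R.map k.op).app C) :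
    (L.flip.Full ∧ L.flip.Faithful) ↔ (R.Full ∧ R.Faithful) := by
  let adj (B : ℬ) : L.flip.obj B ⊣ R.obj (op B) := Adjunction.mkOfHomEquiv
    { homEquiv := fun A C => e A B C
      homEquiv_naturality_left_symm := fun {A' A C} h g => by
        rw [Equiv.symm_apply_eq]
        exact (by simp : h ≫ g = h ≫ e A B C ((e A B C).symm g)).trans
          (natA A' A B C h ((e A B C).symm g)).symm
      homEquiv_naturality_right := fun {A C C'} f g => natC A B C C' g f }
  have adj_homEquiv (A : 𝒜) (B : ℬ) (C : 𝒞) : (adj B).homEquiv A C = e A B C := by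
    simp [adj]
  -- Both sides at `C` are the transpose under `e` of `L(R(B, C), k)` followed by the counit.
  have key {B' B : ℬ} (k : B' ⟶ B) :
      conjugateEquiv (adj B) (adj B') (L.flip.map k) = R.map k.op := by
    ext C
    have h := natB ((R.obj (op B)).obj C) B' B C k ((adj B).counit.app C)
    rw [← adj_homEquiv, ← adj_homEquiv, (adj B).homEquiv_unit] at h
    rw [(adj B).right_triangle_components, Category.id_comp] at h
    rw [← h, Adjunction.homEquiv_unit, conjugateEquiv_apply_app, Functor.map_comp]
    rfl
  have bij : (∀ B' B : ℬ, Function.Bijective (fun k : B' ⟶ B => L.flip.map k)) ↔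
      ∀ B' B : ℬ, Function.Bijective (fun k : op B ⟶ op B' => R.map k) := by
    refine forall_congr' fun B' => forall_congr' fun B => ?_
    rw [← (conjugateEquiv (adj B) (adj B')).comp_bijective,
      ← Function.Bijective.of_comp_iff _ (Quiver.Hom.opEquiv (X := B') (Y := B)).bijective]
    refine iff_of_eq (congrArg _ (funext fun k => key k))
  constructor
  · rintro ⟨_, _⟩
    have h := bij.1 fun B' B => ⟨L.flip.map_injective, L.flip.map_surjective⟩
    exact ⟨⟨fun {X Y} => (h Y.unop X.unop).2⟩, ⟨fun {X Y} _ _ hk => (h Y.unop X.unop).1 hk⟩⟩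
  · rintro ⟨_, _⟩
    have h := bij.2 fun B' B => ⟨R.map_injective, R.map_surjective⟩
    exact ⟨⟨fun {X Y} => (h X Y).2⟩, ⟨fun {X Y} _ _ hk => (h X Y).1 hk⟩⟩
end

section
/- Let 𝒜 be a category with tensor (finite limits and an adjoint triple Γ_! ⊣ Γ* ⊣ Γ_* : 𝒜 ⥤ Type), and let 𝒜' be a full reflective subcategory of 𝒜, with inclusion ι : 𝒜' ⥤ 𝒜, reflection r : 𝒜 ⥤ 𝒜' and unit η : id ⟶ ι ⋙? r (η_A : A ⟶ ι(r(A))). Let B be an object of 𝒜 such that the functor A ↦ Γ_!(A × B) : 𝒜 ⥤ Type admits a right adjoint N : Type ⥤ 𝒜 all of whose values N(S) lie in the essential image of 𝒜'. Then for every object A of 𝒜 the map Γ_!(η_A × id_B) : Γ_!(A × B) → Γ_!(ι(r(A)) × B) is a bijection, naturally in A. -/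
/-!
Write `F A = Γ_!(A × B)`. By the Yoneda lemma, `F(η_A)` is invertible as soon as precomposition
with it is bijective on maps into every set `S`. Under `F ⊣ N` this precomposition becomes
precomposition with `η_A` on maps into `N S`, and that is bijective because `N S` lies in the
reflective subcategory (`unit_precomp_bijective`). Naturality is naturality of `η`.
-/

open CategoryTheory Limits

universe v v' u u'

/-- Objects in the essential image of a fully faithful right adjoint are local with respect to
the unit of the adjunction. -/
theorem unit_precomp_bijective {𝒜 : Type u} [Category.{v} 𝒜]
    {𝒜' : Type u'} [Category.{v'} 𝒜'] {ι : 𝒜' ⥤ 𝒜} [ι.Full] [ι.Faithful]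
    {r : 𝒜 ⥤ 𝒜'} (adj : r ⊣ ι) (A : 𝒜) {Y : 𝒜} (hY : ι.essImage Y) :
    Function.Bijective (fun g : ι.obj (r.obj A) ⟶ Y => adj.unit.app A ≫ g) := by
  obtain ⟨X, ⟨e⟩⟩ := hY
  constructor
  · intro g₁ g₂ h
    obtain ⟨k₁, hk₁⟩ := ι.map_surjective (g₁ ≫ e.inv)
    obtain ⟨k₂, hk₂⟩ := ι.map_surjective (g₂ ≫ e.inv)
    have hk : k₁ = k₂ := by
      apply (adj.homEquiv A X).injective
      rw [adj.homEquiv_unit, adj.homEquiv_unit, hk₁, hk₂]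
      simpa using h =≫ e.inv
    rw [← cancel_mono e.inv, ← hk₁, ← hk₂, hk]
  · intro g
    refine ⟨ι.map ((adj.homEquiv A X).symm (g ≫ e.inv)) ≫ e.hom, ?_⟩
    have h := (adj.homEquiv A X).apply_symm_apply (g ≫ e.inv)
    rw [adj.homEquiv_unit] at h
    simpa using h =≫ e.hom

/-- let `𝒜` be a category with tensor (finite limits and an adjoint
triple `Γ_! ⊣ Γ* ⊣ Γ_*`), `𝒜'` a full reflective subcategory with inclusion `ι`,
reflection `r` and unit `η`.  If `B` is such that `A ↦ Γ_!(A × B)` has a right adjoint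
`N` whose values all lie in the essential image of `ι`, then every
`Γ_!(η_A × id_B) : Γ_!(A × B) → Γ_!(ι(r A) × B)` is a bijection, naturally in `A`. -/
theorem stmt_15 {𝒜 : Type u} [Category.{v} 𝒜] [HasFiniteLimits 𝒜]
    (Γshriek : 𝒜 ⥤ Type v) (Γstar : Type v ⥤ 𝒜) (Γlower : 𝒜 ⥤ Type v)
    (adj₁ : Γshriek ⊣ Γstar) (adj₂ : Γstar ⊣ Γlower)
    {𝒜' : Type u'} [Category.{v'} 𝒜'] (ι : 𝒜' ⥤ 𝒜) [ι.Full] [ι.Faithful]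
    (r : 𝒜 ⥤ 𝒜') (adj : r ⊣ ι)
    (B : 𝒜) (N : Type v ⥤ 𝒜) (adjN : (prod.functor.flip.obj B ⋙ Γshriek) ⊣ N)
    (hN : ∀ S : Type v, ι.essImage (N.obj S)) :
    (∀ A : 𝒜,
      Function.Bijective (Γshriek.map (prod.map (adj.unit.app A) (𝟙 B)))) ∧
    (∀ (A A' : 𝒜) (f : A ⟶ A'),
      Γshriek.map (prod.map (adj.unit.app A') (𝟙 B)) ∘ Γshriek.map (prod.map f (𝟙 B)) =
        Γshriek.map (prod.map ((r ⋙ ι).map f) (𝟙 B)) ∘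
          Γshriek.map (prod.map (adj.unit.app A) (𝟙 B))) := by
  refine ⟨fun A => ?_, fun A A' f => ?_⟩
  · rw [← isIso_iff_bijective]
    change IsIso ((prod.functor.flip.obj B ⋙ Γshriek).map (adj.unit.app A))
    refine isIso_of_coyoneda_map_bijective _ fun S => ?_
    have h := unit_precomp_bijective adj A (hN S)
    -- Transport along the hom-set bijections of `F ⊣ N`, natural in the first variable.
    rw [← Function.Bijective.of_comp_iff' (adjN.homEquiv A S).bijective]
    exact (congrArg Function.Bijective
      (funext fun g => adjN.homEquiv_naturality_left (adj.unit.app A) g)).mpr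
        (h.comp (adjN.homEquiv _ S).bijective)
  · have h := adj.unit.naturality f
    have h' := congrArg (prod.functor.flip.obj B ⋙ Γshriek).map h
    rw [Functor.map_comp, Functor.map_comp] at h'
    exact funext fun x => ConcreteCategory.congr_hom h' x
end
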